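/- arXiv:2207.10483 — 2 statements merged into one kernel-verified Lean document; each statement's English description precedes it below -/
import Mathlib

section
/- Let G_1, …, G_r and H be finite simple graphs, φ : V(H) → ⊔_{d=1}^r V(G_d) a function, and u_h ∈ ℂ^{π(φ(h))} unit vectors (h ∈ V(H)) such that for all distinct non-adjacent h, h' ∈ V(H), either ¬(φ(h) ≃ φ(h')) or ⟨u_h, u_{h'}⟩ = 0. Then H_f^ℂ(H) ≤ ∑_{d=1}^r d·H_f^ℂ(G_d), where H_f^ℂ is the fractional Haemers bound over ℂ. -/
open scoped Kronecker
open Matrix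

namespace NCG
/-- For vertices of a disjoint family of graphs: `g ≃ g'` iff they lie in the same member
graph and are adjacent or equal there. -/
def SimRel {r : ℕ} {V : Fin r → Type} (G : ∀ d, SimpleGraph (V d)) :
    (Σ d, V d) → (Σ d, V d) → Prop :=
  fun p q => ∃ e : p.1 = q.1,
    (G q.1).Adj (cast (congrArg V e) p.2) q.2 ∨ cast (congrArg V e) p.2 = q.2

/-- The fractional Haemers bound of a graph over a field `F`. -/
noncomputable def fracHaemers (F : Type) [Field F] {V : Type} [Fintype V] [DecidableEq V]
    (G : SimpleGraph V) : ℝ :=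
  sInf {t : ℝ | ∃ (a b : ℕ) (S : V → Submodule F (Fin a → F)), 0 < b ∧
    (∀ g, Module.finrank F (S g) = b) ∧
    (∀ g, S g ⊓ (⨆ g' ∈ {g' : V | g' ≠ g ∧ ¬ G.Adj g g'}, S g') = ⊥) ∧
    t = (a : ℝ) / (b : ℝ)}

/-- The set of ratios. -/
def repSet (F : Type) [Field F] {V : Type} (G : SimpleGraph V) : Set ℝ :=
  {t : ℝ | ∃ (a b : ℕ) (S : V → Submodule F (Fin a → F)), 0 < b ∧
    (∀ g, Module.finrank F (S g) = b) ∧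
    (∀ g, S g ⊓ (⨆ g' ∈ {g' : V | g' ≠ g ∧ ¬ G.Adj g g'}, S g') = ⊥) ∧
    t = (a : ℝ) / (b : ℝ)}

theorem repSet_nonneg {F : Type} [Field F] {V : Type} (G : SimpleGraph V) {t : ℝ}
    (ht : t ∈ repSet F G) : 0 ≤ t := by
  obtain ⟨a, b, S, hb, h1, h2, rfl⟩ := ht
  positivity

theorem repSet_of_space {F : Type} [Field F] {V : Type} (G : SimpleGraph V)
    {W : Type} [AddCommGroup W] [Module F W] [FiniteDimensional F W] (b : ℕ) (hb : 0 < b)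
    (T : V → Submodule F W) (hT : ∀ g, Module.finrank F (T g) = b)
    (hd : ∀ g, T g ⊓ (⨆ g' ∈ {g' : V | g' ≠ g ∧ ¬ G.Adj g g'}, T g') = ⊥) :
    (Module.finrank F W : ℝ) / b ∈ repSet F G := by
  let e : W ≃ₗ[F] (Fin (Module.finrank F W) → F) := (Module.finBasis F W).equivFun
  refine ⟨_, b, fun g => (T g).map e.toLinearMap, hb, fun g => ?_, fun g => ?_, rfl⟩
  · rw [← hT g]
    exact LinearEquiv.finrank_map_eq e (T g)
  · simp only [← Submodule.map_iSup]
    rw [← Submodule.map_inf _ e.injective, hd g, Submodule.map_bot]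

theorem repSet_nonempty {F : Type} [Field F] {V : Type} [Fintype V] [DecidableEq V]
    (G : SimpleGraph V) : (repSet F G).Nonempty := by
  refine ⟨_, repSet_of_space G (W := V → F) 1 one_pos
    (fun g => Submodule.span F {Pi.single g 1}) (fun g => ?_) (fun g => ?_)⟩
  · exact finrank_span_singleton (by simp)
  · rw [eq_bot_iff]
    rintro x ⟨hx1, hx2⟩
    have hle : (⨆ g' ∈ {g' : V | g' ≠ g ∧ ¬ G.Adj g g'},
        Submodule.span F {(Pi.single g' 1 : V → F)}) ≤
        LinearMap.ker (LinearMap.proj g : (V → F) →ₗ[F] F) := by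
      refine iSup₂_le fun g' hg' => ?_
      rw [Submodule.span_singleton_le_iff_mem]
      simp [Pi.single_eq_of_ne (Ne.symm hg'.1)]
    have h0 := hle hx2
    obtain ⟨c, rfl⟩ := Submodule.mem_span_singleton.1 hx1
    simp at h0
    simp [h0]

section
variable {r : ℕ} (k a : Fin r → ℕ)

/-- ambient space -/
abbrev Amb : Type := ∀ d : Fin r, Fin (d.1 + 1) → Fin (k d) → Fin (a d) → ℂ

/-- embedding -/
noncomputable def emb (d : Fin r) (u : Fin (d.1 + 1) → ℂ) :
    (Fin (k d) → Fin (a d) → ℂ) →ₗ[ℂ] Amb k a :=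
  (LinearMap.single ℂ (fun d : Fin r => Fin (d.1 + 1) → Fin (k d) → Fin (a d) → ℂ) d) ∘ₗ
    LinearMap.pi (fun i => u i • LinearMap.id)

/-- contraction -/
noncomputable def contr (d : Fin r) (u : Fin (d.1 + 1) → ℂ) :
    Amb k a →ₗ[ℂ] (Fin (k d) → Fin (a d) → ℂ) :=
  (∑ i, star (u i) • LinearMap.proj i) ∘ₗ LinearMap.proj d

theorem contr_emb_same (d : Fin r) (u v : Fin (d.1 + 1) → ℂ) (x) :
    contr k a d u (emb k a d v x) = (star u ⬝ᵥ v) • x := by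
  simp [contr, emb, LinearMap.sum_apply, dotProduct, Finset.sum_smul, smul_smul]

theorem contr_emb_ne {d d' : Fin r} (hne : d ≠ d') (u : Fin (d.1 + 1) → ℂ)
    (v : Fin (d'.1 + 1) → ℂ) (x) :
    contr k a d u (emb k a d' v x) = 0 := by
  simp [contr, emb, LinearMap.sum_apply, Pi.single_eq_of_ne hne]

variable {V : Fin r → Type} (G : ∀ d, SimpleGraph (V d))
  (S : ∀ d, V d → Submodule ℂ (Fin (a d) → ℂ))

theorem contr_mem (p q : Σ d, V d) (u : Fin (p.1.1 + 1) → ℂ) (v : Fin (q.1.1 + 1) → ℂ)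
    (h : ¬ SimRel G p q ∨ ∀ e : p.1 = q.1,
          star u ⬝ᵥ (fun i => v (Fin.cast (congrArg (fun d : Fin r => d.1 + 1) e) i)) = 0)
    (x : Fin (k q.1) → Fin (a q.1) → ℂ) (hx : ∀ i, x i ∈ S q.1 q.2) (i) :
    contr k a p.1 u (emb k a q.1 v x) i ∈
      ⨆ g' ∈ {g' : V p.1 | g' ≠ p.2 ∧ ¬ (G p.1).Adj p.2 g'}, S p.1 g' := by
  obtain ⟨d, g⟩ := p
  obtain ⟨d', g'⟩ := q
  dsimp only at *
  by_cases hd : d = d'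
  · subst hd
    rw [contr_emb_same]
    rcases h with h | h
    · have hg : g' ∈ {g' : V d | g' ≠ g ∧ ¬ (G d).Adj g g'} := by
        constructor
        · rintro rfl
          exact h ⟨rfl, Or.inr rfl⟩
        · intro hadj
          exact h ⟨rfl, Or.inl hadj⟩
      exact Submodule.smul_mem _ _
        ((le_iSup₂_of_le (f := fun g' (_ : g' ∈ {g' : V d | g' ≠ g ∧ ¬ (G d).Adj g g'}) => S d g')
          g' hg le_rfl) (hx i))
    · have h0 : star u ⬝ᵥ v = 0 := h rfl
      rw [h0, zero_smul]
      exact Submodule.zero_mem _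
  · rw [contr_emb_ne k a hd]
    exact Submodule.zero_mem _

/-- power of a subspace, included -/
noncomputable def powIncl (p : Σ d, V d) :
    (Fin (k p.1) → S p.1 p.2) →ₗ[ℂ] (Fin (k p.1) → Fin (a p.1) → ℂ) :=
  LinearMap.pi fun i => (S p.1 p.2).subtype ∘ₗ LinearMap.proj i

theorem contr_self (d : Fin r) (u : Fin (d.1 + 1) → ℂ) (hu : star u ⬝ᵥ u = 1) (x) :
    contr k a d u (emb k a d u x) = x := by
  rw [contr_emb_same, hu, one_smul]

end

theorem sum_mem_repSet
    {r : ℕ} {V : Fin r → Type}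
    (G : ∀ d, SimpleGraph (V d))
    {VH : Type} (H : SimpleGraph VH)
    (φ : VH → Σ d, V d) (u : ∀ h : VH, Fin ((φ h).1.1 + 1) → ℂ)
    (hunit : ∀ h, star (u h) ⬝ᵥ u h = 1)
    (horth : ∀ h h', h ≠ h' → ¬ H.Adj h h' →
      (¬ SimRel G (φ h) (φ h') ∨
        ∀ e : (φ h).1 = (φ h').1,
          star (u h) ⬝ᵥ
            (fun i => u h' (Fin.cast (congrArg (fun d : Fin r => d.1 + 1) e) i)) = 0))
    (t : Fin r → ℝ) (ht : ∀ d, t d ∈ repSet ℂ (G d)) :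
    ∑ d : Fin r, ((d.1 + 1 : ℕ) : ℝ) * t d ∈ repSet ℂ H := by
  choose a b S hb hS hdis hteq using ht
  have hdvd : ∀ d, b d ∣ ∏ d, b d := fun d => Finset.dvd_prod_of_mem b (Finset.mem_univ d)
  choose k hk using hdvd
  have hB : 0 < ∏ d, b d := Finset.prod_pos fun d _ => hb d
  have key := repSet_of_space H (W := Amb k a) (∏ d, b d) hB
    (fun h => LinearMap.range (emb k a (φ h).1 (u h) ∘ₗ powIncl k a S (φ h))) ?_ ?_
  · convert key using 1
    rw [Module.finrank_pi_fintype]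
    simp only [Module.finrank_pi_fintype, Module.finrank_self, Finset.sum_const, Finset.card_univ,
      Fintype.card_fin, smul_eq_mul, mul_one]
    rw [Nat.cast_sum, Finset.sum_div]
    refine Finset.sum_congr rfl fun d _ => ?_
    rw [hteq d, hk d]
    have h1 : (b d : ℝ) ≠ 0 := by exact_mod_cast (hb d).ne'
    have h2 : (k d : ℝ) ≠ 0 := by
      have : k d ≠ 0 := by
        intro h0
        have := hk d
        rw [h0, mul_zero] at this
        omega
      exact_mod_cast this
    push_cast
    field_simp
  · intro h
    rw [LinearMap.finrank_range_of_inj, Module.finrank_pi_fintype]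
    · simp only [hS, Finset.sum_const, Finset.card_univ, Fintype.card_fin, smul_eq_mul]
      rw [hk (φ h).1, mul_comm]
    · intro x y hxy
      have h1 := congrArg (contr k a (φ h).1 (u h)) hxy
      simp only [LinearMap.comp_apply, contr_self k a _ _ (hunit h)] at h1
      funext i
      exact Subtype.ext (congrFun h1 i)
  · intro h
    rw [eq_bot_iff]
    rintro w ⟨⟨x, rfl⟩, hx2⟩
    have hle : (⨆ h' ∈ {h' : VH | h' ≠ h ∧ ¬ H.Adj h h'},
        LinearMap.range (emb k a (φ h').1 (u h') ∘ₗ powIncl k a S (φ h'))) ≤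
        (Submodule.pi Set.univ (fun _ : Fin (k (φ h).1) =>
          ⨆ g' ∈ {g' : V (φ h).1 | g' ≠ (φ h).2 ∧ ¬ (G (φ h).1).Adj (φ h).2 g'},
            S (φ h).1 g')).comap (contr k a (φ h).1 (u h)) := by
      refine iSup₂_le fun h' hh' => ?_
      rintro _ ⟨y, rfl⟩
      intro i _
      exact contr_mem k a G S (φ h) (φ h') (u h) (u h') (horth h h' hh'.1.symm hh'.2) _
        (fun i => (y i).2) i
    have h0 := hle hx2
    have hx0 : x = 0 := by
      funext i
      have h1 := h0 i (Set.mem_univ i)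
      simp only [LinearMap.comp_apply, contr_self k a _ _ (hunit h)] at h1
      have h2 : ((x i : Fin (a (φ h).1) → ℂ)) ∈ (⊥ : Submodule ℂ (Fin (a (φ h).1) → ℂ)) := by
        rw [← hdis (φ h).1 (φ h).2]
        exact ⟨(x i).2, h1⟩
      exact Subtype.ext ((Submodule.mem_bot ℂ).1 h2)
    rw [hx0, map_zero]
    exact Submodule.zero_mem _

theorem fracHaemersC_sum_bound
    {r : ℕ} {V : Fin r → Type} [∀ d, Fintype (V d)] [∀ d, DecidableEq (V d)]
    (G : ∀ d, SimpleGraph (V d))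
    {VH : Type} [Fintype VH] [DecidableEq VH] (H : SimpleGraph VH)
    (φ : VH → Σ d, V d) (u : ∀ h : VH, Fin ((φ h).1.1 + 1) → ℂ)
    (hunit : ∀ h, star (u h) ⬝ᵥ u h = 1)
    (horth : ∀ h h', h ≠ h' → ¬ H.Adj h h' →
      (¬ SimRel G (φ h) (φ h') ∨
        ∀ e : (φ h).1 = (φ h').1,
          star (u h) ⬝ᵥ
            (fun i => u h' (Fin.cast (congrArg (fun d : Fin r => d.1 + 1) e) i)) = 0)) :
    fracHaemers ℂ H ≤ ∑ d : Fin r, ((d.1 + 1 : ℕ) : ℝ) * fracHaemers ℂ (G d) := by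
  have hdef : ∀ {V : Type} [Fintype V] [DecidableEq V] (G : SimpleGraph V),
      fracHaemers ℂ G = sInf (repSet ℂ G) := fun _ => rfl
  set C : ℝ := ∑ d : Fin r, ((d.1 + 1 : ℕ) : ℝ) with hC
  have hC0 : 0 ≤ C := Finset.sum_nonneg fun d _ => Nat.cast_nonneg _
  refine le_of_forall_pos_le_add fun ε hε => ?_
  have hδ : 0 < ε / (C + 1) := by positivity
  have hex : ∀ d, ∃ t ∈ repSet ℂ (G d), t < fracHaemers ℂ (G d) + ε / (C + 1) := fun d =>
    exists_lt_of_csInf_lt (repSet_nonempty (G d)) (by rw [hdef]; linarith)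
  choose t ht hlt using hex
  have h1 : fracHaemers ℂ H ≤ ∑ d : Fin r, ((d.1 + 1 : ℕ) : ℝ) * t d :=
    csInf_le ⟨0, fun _ h => repSet_nonneg H h⟩ (sum_mem_repSet G H φ u hunit horth t ht)
  have h2 : ∑ d : Fin r, ((d.1 + 1 : ℕ) : ℝ) * t d ≤
      ∑ d : Fin r, ((d.1 + 1 : ℕ) : ℝ) * (fracHaemers ℂ (G d) + ε / (C + 1)) :=
    Finset.sum_le_sum fun d _ => mul_le_mul_of_nonneg_left (hlt d).le (Nat.cast_nonneg _)
  have h3 : C * (ε / (C + 1)) ≤ ε := by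
    rw [mul_div_assoc', div_le_iff₀ (by positivity)]
    nlinarith
  simp only [mul_add, Finset.sum_add_distrib, ← Finset.sum_mul] at h2
  linarith


end NCG
end

section
/- Let g : ℕ_{>0} → ℝ satisfy g(mn) = g(m)g(n) for all m, n ≥ 1, let g be nondecreasing, and suppose g(2) > 0. Then g(d) = d^α for every d ≥ 1, where α = log₂ g(2). -/
namespace NCG

theorem nonpos_of_nat_mul_le (x C : ℝ) (h : ∀ k : ℕ, (k : ℝ) * x ≤ C) : x ≤ 0 := by
  by_contra hx
  have hx : 0 < x := not_le.mp hx
  obtain ⟨k, hk⟩ := exists_nat_gt (C / x)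
  rw [div_lt_iff₀ hx] at hk
  linarith [h k]

theorem multiplicative_monotone_eq_rpow
    (g : ℕ → ℝ) (hmul : ∀ m n, 1 ≤ m → 1 ≤ n → g (m * n) = g m * g n)
    (hmono : ∀ m n, 1 ≤ m → m ≤ n → g m ≤ g n) (hpos : 0 < g 2) :
    ∀ d, 1 ≤ d → g d = (d : ℝ) ^ Real.logb 2 (g 2) := by
  intro d hd
  have h1 : g 1 = 1 := by
    have h := hmul 1 2 le_rfl (by norm_num)
    rw [one_mul] at h
    exact mul_right_cancel₀ hpos.ne' (by linarith)
  have hge : ∀ n, 1 ≤ n → 1 ≤ g n := fun n hn => h1 ▸ hmono 1 n le_rfl hn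
  have hpow : ∀ n, 1 ≤ n → ∀ k, g (n ^ k) = g n ^ k := by
    intro n hn k
    induction k with
    | zero => simpa using h1
    | succ k ih => rw [pow_succ, hmul _ _ (Nat.one_le_pow _ _ hn) hn, ih, pow_succ]
  have hgd : 0 < g d := by linarith [hge d hd]
  have hd0 : (0 : ℝ) < d := by exact_mod_cast hd
  have hL : 0 ≤ Real.log (g 2) := Real.log_nonneg (hge 2 (by norm_num))
  have hl : 0 < Real.log 2 := Real.log_pos (by norm_num)
  have key : ∀ k : ℕ, ∃ m : ℕ, (m : ℝ) * Real.log (g 2) ≤ k * Real.log (g d) ∧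
      k * Real.log (g d) ≤ (m + 1) * Real.log (g 2) ∧
      m * Real.log 2 ≤ k * Real.log d ∧ k * Real.log d ≤ (m + 1) * Real.log 2 := by
    intro k
    have hdk : 1 ≤ d ^ k := Nat.one_le_pow _ _ hd
    have a : 2 ^ Nat.log 2 (d ^ k) ≤ d ^ k := Nat.pow_log_le_self 2 (by omega)
    have b : d ^ k ≤ 2 ^ (Nat.log 2 (d ^ k) + 1) :=
      (Nat.lt_pow_succ_log_self (by norm_num) _).le
    generalize Nat.log 2 (d ^ k) = m at a b
    have a' := hmono _ _ Nat.one_le_two_pow a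
    have b' := hmono _ _ hdk b
    rw [hpow 2 (by norm_num), hpow d hd] at a' b'
    have a'' : (2 : ℝ) ^ m ≤ (d : ℝ) ^ k := by exact_mod_cast a
    have b'' : (d : ℝ) ^ k ≤ (2 : ℝ) ^ (m + 1) := by exact_mod_cast b
    have e1 := Real.log_le_log (by positivity) a'
    have e2 := Real.log_le_log (by positivity) b'
    have e3 := Real.log_le_log (by positivity) a''
    have e4 := Real.log_le_log (by positivity) b''
    simp only [Real.log_pow, Nat.cast_add, Nat.cast_one] at e1 e2 e3 e4
    exact ⟨m, e1, e2, e3, e4⟩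
  have u := nonpos_of_nat_mul_le
    (Real.log (g d) * Real.log 2 - Real.log d * Real.log (g 2))
    (Real.log 2 * Real.log (g 2)) (by
      intro k
      obtain ⟨m, e1, e2, e3, e4⟩ := key k
      have := mul_le_mul_of_nonneg_right e2 hl.le
      have := mul_le_mul_of_nonneg_right e3 hL
      nlinarith)
  have v := nonpos_of_nat_mul_le
    (Real.log d * Real.log (g 2) - Real.log (g d) * Real.log 2)
    (Real.log 2 * Real.log (g 2)) (by
      intro k
      obtain ⟨m, e1, e2, e3, e4⟩ := key k
      have := mul_le_mul_of_nonneg_right e1 hl.le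
      have := mul_le_mul_of_nonneg_right e4 hL
      nlinarith)
  rw [Real.rpow_def_of_pos hd0, Real.logb, ← mul_div_assoc,
    show Real.log d * Real.log (g 2) = Real.log (g d) * Real.log 2 by linarith,
    mul_div_cancel_right₀ _ hl.ne', Real.exp_log hgd]

end NCG
end
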